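/- For all w1, w2 ∈ H^0 one has Z̄(w1 *̄ w2) = Z̄(w1) · Z̄(w2); that is, the n-evaluation map Z̄ is multiplicative with respect to the n-harmonic product. -/

import Mathlib

open scoped BigOperators

/-- The two-letter alphabet {x, y}. -/
inductive Letter : Type
  | x : Letter
  | y : Letter
deriving DecidableEq

/-- `H = ℚ⟨x,y⟩`, the noncommutative polynomial ring over ℚ in two
indeterminates, realized as the monoid algebra of the free monoid on `{x,y}`. -/
abbrev H : Type := MonoidAlgebra ℚ (FreeMonoid Letter)

namespace H

/-- The monomial (word) of `H` corresponding to an element of the free monoid. -/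
noncomputable def word (w : FreeMonoid Letter) : H := MonoidAlgebra.single w 1

/-- The generator `x`. -/
noncomputable def X : H := word (FreeMonoid.of Letter.x)

/-- The generator `y`. -/
noncomputable def Y : H := word (FreeMonoid.of Letter.y)

/-- The word `z_k = x^{k-1} y` (for `k ≥ 1`). -/
def zW (k : ℕ) : FreeMonoid Letter :=
  FreeMonoid.ofList (List.replicate (k - 1) Letter.x ++ [Letter.y])

/-- `z_k = x^{k-1} y` as an element of `H`. -/
noncomputable def z (k : ℕ) : H := word (zW k)

/-- A list `[k₁,…,kₙ]` gives the word `z_{k₁} z_{k₂} ⋯ z_{kₙ}`. -/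
def zListW (ks : List ℕ) : FreeMonoid Letter :=
  FreeMonoid.ofList (ks.flatMap fun k => List.replicate (k - 1) Letter.x ++ [Letter.y])

/-- `H¹ = ℚ + Hy` as a ℚ-submodule of `H`. -/
noncomputable def H1 : Submodule ℚ H :=
  LinearMap.range (LinearMap.mulRight ℚ Y) ⊔ Submodule.span ℚ {1}

/-- `H⁰ = ℚ + xHy` as a ℚ-submodule of `H`. -/
noncomputable def H0 : Submodule ℚ H :=
  LinearMap.range ((LinearMap.mulRight ℚ Y).comp (LinearMap.mulLeft ℚ X)) ⊔
    Submodule.span ℚ {1}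

/-- Parse a word of `H¹` into the exponent list of its `z`-decomposition:
`z_{k₁}⋯z_{kₙ} ↦ [k₁,…,kₙ]` (auxiliary accumulator version). -/
def toZAux : List Letter → ℕ → List ℕ
  | [], _ => []
  | Letter.x :: r, n => toZAux r (n + 1)
  | Letter.y :: r, n => (n + 1) :: toZAux r 0

/-- The `z`-decomposition of a word of `H¹`. -/
def toZ (w : FreeMonoid Letter) : List ℕ := toZAux (FreeMonoid.toList w) 0

/-- The harmonic product on words of `H¹` (via `z`-decompositions):
`1 * w = w * 1 = w` and
`z_k w₁ * z_l w₂ = z_k (w₁ * z_l w₂) + z_l (z_k w₁ * w₂) + z_{k+l} (w₁ * w₂)`. -/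
noncomputable def harmW : List ℕ → List ℕ → H
  | [], w => word (zListW w)
  | k :: w1, [] => word (zListW (k :: w1))
  | k :: w1, l :: w2 =>
      z k * harmW w1 (l :: w2) + z l * harmW (k :: w1) w2 + z (k + l) * harmW w1 w2
termination_by w1 w2 => w1.length + w2.length
decreasing_by all_goals simp [Nat.lt_succ_iff] <;> omega

/-- The n-harmonic product on words of `H¹`:
`1 *̄ w = w *̄ 1 = w` and
`z_k w₁ *̄ z_l w₂ = z_k (w₁ *̄ z_l w₂) + z_l (z_k w₁ *̄ w₂) − z_{k+l} (w₁ *̄ w₂)`. -/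
noncomputable def nharmW : List ℕ → List ℕ → H
  | [], w => word (zListW w)
  | k :: w1, [] => word (zListW (k :: w1))
  | k :: w1, l :: w2 =>
      z k * nharmW w1 (l :: w2) + z l * nharmW (k :: w1) w2 - z (k + l) * nharmW w1 w2
termination_by w1 w2 => w1.length + w2.length
decreasing_by all_goals simp [Nat.lt_succ_iff] <;> omega

/-- The harmonic product `*` on `H¹`, extended ℚ-bilinearly. -/
noncomputable def harm (a b : H) : H :=
  Finsupp.sum a.coeff fun w1 c1 =>
    Finsupp.sum b.coeff fun w2 c2 => (c1 * c2) • harmW (toZ w1) (toZ w2)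

/-- The n-harmonic product `*̄` on `H¹`, extended ℚ-bilinearly. -/
noncomputable def nharm (a b : H) : H :=
  Finsupp.sum a.coeff fun w1 c1 =>
    Finsupp.sum b.coeff fun w2 c2 => (c1 * c2) • nharmW (toZ w1) (toZ w2)

/-- The letter exchange `τ(x) = y`, `τ(y) = x`. -/
def τ : Letter → Letter
  | Letter.x => Letter.y
  | Letter.y => Letter.x

/-- `δ(w) = 1` if `w` is the empty word, `0` otherwise. -/
def δ : List Letter → ℚ
  | [] => 1
  | _ :: _ => 0

/-- The shuffle product on words:
`1 ш w = w ш 1 = w` and `u₁w₁ ш u₂w₂ = u₁(w₁ ш u₂w₂) + u₂(u₁w₁ ш w₂)`. -/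
noncomputable def shW : List Letter → List Letter → H
  | [], w => word (FreeMonoid.ofList w)
  | u :: w, [] => word (FreeMonoid.ofList (u :: w))
  | u1 :: w1, u2 :: w2 =>
      word (FreeMonoid.of u1) * shW w1 (u2 :: w2) +
        word (FreeMonoid.of u2) * shW (u1 :: w1) w2
termination_by w1 w2 => w1.length + w2.length
decreasing_by all_goals simp [Nat.lt_succ_iff]

/-- The n-shuffle product on words: `1 ш̄ w = w ш̄ 1 = w` and
`u₁w₁ ш̄ u₂w₂ = u₁(w₁ ш̄ u₂w₂) + u₂(u₁w₁ ш̄ w₂) − δ(w₁)τ(u₁)u₂w₂ − δ(w₂)τ(u₂)u₁w₁`. -/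
noncomputable def nshW : List Letter → List Letter → H
  | [], w => word (FreeMonoid.ofList w)
  | u :: w, [] => word (FreeMonoid.ofList (u :: w))
  | u1 :: w1, u2 :: w2 =>
      word (FreeMonoid.of u1) * nshW w1 (u2 :: w2) +
        word (FreeMonoid.of u2) * nshW (u1 :: w1) w2 -
        δ w1 • word (FreeMonoid.ofList (τ u1 :: u2 :: w2)) -
        δ w2 • word (FreeMonoid.ofList (τ u2 :: u1 :: w1))
termination_by w1 w2 => w1.length + w2.length
decreasing_by all_goals simp [Nat.lt_succ_iff]

/-- The shuffle product `ш` on `H`, extended ℚ-bilinearly. -/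
noncomputable def sh (a b : H) : H :=
  Finsupp.sum a.coeff fun w1 c1 =>
    Finsupp.sum b.coeff fun w2 c2 =>
      (c1 * c2) • shW (FreeMonoid.toList w1) (FreeMonoid.toList w2)

/-- The n-shuffle product `ш̄` on `H`, extended ℚ-bilinearly. -/
noncomputable def nsh (a b : H) : H :=
  Finsupp.sum a.coeff fun w1 c1 =>
    Finsupp.sum b.coeff fun w2 c2 =>
      (c1 * c2) • nshW (FreeMonoid.toList w1) (FreeMonoid.toList w2)

/-- `S₁`: the ℚ-algebra endomorphism of `H` with `S₁(x) = x`, `S₁(y) = x + y`. -/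
noncomputable def S1 : H →ₐ[ℚ] H :=
  MonoidAlgebra.lift ℚ H (FreeMonoid Letter)
    (FreeMonoid.lift fun u => match u with
      | Letter.x => X
      | Letter.y => X + Y)

/-- `S₂`: the ℚ-algebra endomorphism of `H` with `S₂(x) = x`, `S₂(y) = y − x`. -/
noncomputable def S2 : H →ₐ[ℚ] H :=
  MonoidAlgebra.lift ℚ H (FreeMonoid Letter)
    (FreeMonoid.lift fun u => match u with
      | Letter.x => X
      | Letter.y => Y - X)

/-- `S` on a word: `S(1) = 1` and `S(Fy) = S₁(F)y`. -/
noncomputable def SW (w : FreeMonoid Letter) : H :=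
  match (FreeMonoid.toList w).getLast? with
  | some Letter.y =>
      S1 (word (FreeMonoid.ofList (FreeMonoid.toList w).dropLast)) * Y
  | _ => word w

/-- The ℚ-linear map `S : H¹ → H¹` with `S(1) = 1`, `S(Fy) = S₁(F)y`. -/
noncomputable def S (a : H) : H := Finsupp.sum a.coeff fun w c => c • SW w

/-- `S̃` on a word: `S̃(1) = 1` and `S̃(Fy) = S₂(F)y`. -/
noncomputable def StW (w : FreeMonoid Letter) : H :=
  match (FreeMonoid.toList w).getLast? with
  | some Letter.y =>
      S2 (word (FreeMonoid.ofList (FreeMonoid.toList w).dropLast)) * Y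
  | _ => word w

/-- The ℚ-linear map `S̃ : H¹ → H¹` with `S̃(1) = 1`, `S̃(Fy) = S₂(F)y`. -/
noncomputable def St (a : H) : H := Finsupp.sum a.coeff fun w c => c • StW w

/-- The multiple zeta value `ζ(k₁,…,kₙ)`: the sum over strictly decreasing
tuples `m₁ > m₂ > ⋯ > mₙ > 0` of `1/(m₁^{k₁}⋯mₙ^{kₙ})`. -/
noncomputable def mzeta (ks : List ℕ) : ℝ :=
  ∑' m : {f : Fin ks.length → ℕ // (∀ i, 0 < f i) ∧
      ∀ i j : Fin ks.length, i < j → f j < f i},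
    ∏ i : Fin ks.length, ((m.1 i : ℝ) ^ ks.get i)⁻¹

/-- The non-strict multiple zeta value `ζ̄(k₁,…,kₙ)`: the sum over weakly
decreasing tuples `m₁ ≥ m₂ ≥ ⋯ ≥ mₙ > 0` of `1/(m₁^{k₁}⋯mₙ^{kₙ})`. -/
noncomputable def nmzeta (ks : List ℕ) : ℝ :=
  ∑' m : {f : Fin ks.length → ℕ // (∀ i, 0 < f i) ∧
      ∀ i j : Fin ks.length, i ≤ j → f j ≤ f i},
    ∏ i : Fin ks.length, ((m.1 i : ℝ) ^ ks.get i)⁻¹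

/-- The evaluation map `Z : H⁰ → ℝ`, `Z(1) = 1`,
`Z(z_{k₁}⋯z_{kₙ}) = ζ(k₁,…,kₙ)` (extended ℚ-linearly to `H`). -/
noncomputable def Z (a : H) : ℝ := Finsupp.sum a.coeff fun w c => (c : ℝ) * mzeta (toZ w)

/-- The n-evaluation map `Z̄ : H⁰ → ℝ`, `Z̄(1) = 1`,
`Z̄(z_{k₁}⋯z_{kₙ}) = ζ̄(k₁,…,kₙ)` (extended ℚ-linearly to `H`). -/
noncomputable def Zbar (a : H) : ℝ := Finsupp.sum a.coeff fun w c => (c : ℝ) * nmzeta (toZ w)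

/-- `i`-fold n-harmonic power: `a^{*̄ 0} = 1`, `a^{*̄ (i+1)} = a *̄ a^{*̄ i}`. -/
noncomputable def nharmPow : ℕ → H → H
  | 0, _ => 1
  | i + 1, a => nharm a (nharmPow i a)

/-- `i`-fold n-shuffle power: `a^{ш̄ 0} = 1`, `a^{ш̄ (i+1)} = a ш̄ a^{ш̄ i}`. -/
noncomputable def nshPow : ℕ → H → H
  | 0, _ => 1
  | i + 1, a => nsh a (nshPow i a)

end H

open H

/-!
A truncated value `∑ 1 / (m₁^{k₁} ⋯ mₙ^{kₙ})` over `N ≥ m₁ ≥ ⋯ ≥ mₙ ≥ 1` satisfies a recursion in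
`n`: summing over `m₁` first leaves the value of `(k₂, …, kₙ)` truncated at `m₁`. Multiplying two
such sums and splitting according to which of the two leading summation variables is larger, the
diagonal is counted twice, and removing it once produces exactly the recursion of `*̄`.
Multiplicativity thus holds at every finite level `N`, for all of `H`, and passes to the limit
`N → ∞` on elements supported on admissible words, which are closed under `*̄`.
-/

open Filter Finset Topology

theorem sum_Icc_mul_sum_Icc {ι R : Type*} [LinearOrder ι] [LocallyFiniteOrder ι]
    [NonUnitalNonAssocRing R] (f g : ι → R) (a b : ι) :
    (∑ i ∈ Icc a b, f i) * ∑ j ∈ Icc a b, g j =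
      ∑ i ∈ Icc a b, f i * ∑ j ∈ Icc a i, g j + ∑ j ∈ Icc a b, (∑ i ∈ Icc a j, f i) * g j -
        ∑ i ∈ Icc a b, f i * g i := by
  have sum_Icc_eq_sum_ite (h : ι → R) {c : ι} (hc : c ∈ Icc a b) :
      ∑ i ∈ Icc a c, h i = ∑ i ∈ Icc a b, if i ≤ c then h i else 0 := by
    rw [← sum_filter]
    congr 1
    ext i
    grind
  have lower : ∑ i ∈ Icc a b, f i * ∑ j ∈ Icc a i, g j =
      ∑ i ∈ Icc a b, ∑ j ∈ Icc a b, if j ≤ i then f i * g j else 0 :=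
    sum_congr rfl fun i hi => by simp only [sum_Icc_eq_sum_ite g hi, mul_sum, mul_ite, mul_zero]
  have upper : ∑ j ∈ Icc a b, (∑ i ∈ Icc a j, f i) * g j =
      ∑ i ∈ Icc a b, ∑ j ∈ Icc a b, if i ≤ j then f i * g j else 0 := by
    rw [sum_comm]
    exact sum_congr rfl fun j hj => by
      simp only [sum_Icc_eq_sum_ite f hj, sum_mul, ite_mul, zero_mul]
  have diagonal : ∑ i ∈ Icc a b, f i * g i =
      ∑ i ∈ Icc a b, ∑ j ∈ Icc a b, if i = j then f i * g j else 0 :=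
    sum_congr rfl fun i hi => by rw [sum_ite_eq, if_pos hi]
  rw [lower, upper, diagonal, sum_mul_sum]
  simp only [← sum_add_distrib, ← sum_sub_distrib]
  refine sum_congr rfl fun i _ => sum_congr rfl fun j _ => ?_
  rcases lt_trichotomy i j with h | rfl | h
  · simp [h.le, h.not_ge, h.ne]
  · simp
  · simp [h.le, h.not_ge, h.ne']

theorem summable_prod_apply {ι : Type*} [Fintype ι] {κ : ι → Type*} {f : ∀ i, κ i → ℝ}
    (hf₀ : ∀ i x, 0 ≤ f i x) (hf : ∀ i, Summable (f i)) :
    Summable fun x : ∀ i, κ i => ∏ i, f i (x i) := by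
  classical
  refine summable_of_sum_le (fun x => prod_nonneg fun i _ => hf₀ i (x i))
    (c := ∏ i, ∑' x, f i x) fun s => ?_
  have subset_box : s ⊆ Fintype.piFinset fun i => s.image fun x => x i := fun x hx =>
    Fintype.mem_piFinset.2 fun i => mem_image_of_mem _ hx
  calc ∑ x ∈ s, ∏ i, f i (x i)
      ≤ ∑ x ∈ Fintype.piFinset fun i => s.image fun x => x i, ∏ i, f i (x i) :=
        sum_le_sum_of_subset_of_nonneg subset_box fun x _ _ =>
          prod_nonneg fun i _ => hf₀ i (x i)
    _ = ∏ i, ∑ x ∈ s.image fun x => x i, f i x := (prod_univ_sum _ _).symm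
    _ ≤ ∏ i, ∑' x, f i x :=
        prod_le_prod (fun i _ => sum_nonneg fun x _ => hf₀ i x) fun i _ =>
          (hf i).sum_le_tsum _ fun x _ => hf₀ i x

theorem antitone_finCons_iff {α : Type*} [Preorder α] {n : ℕ} {a : α} {f : Fin n → α} :
    Antitone (Fin.cons a f : Fin (n + 1) → α) ↔ (∀ i, f i ≤ a) ∧ Antitone f := by
  constructor
  · intro h
    exact ⟨fun i => by simpa using h (Fin.zero_le i.succ),
      fun i j hij => by simpa using h (Fin.succ_le_succ_iff.2 hij)⟩
  · rintro ⟨hle, hf⟩ i j hij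
    cases j using Fin.cases with
    | zero => rw [Fin.le_zero_iff.1 hij]
    | succ j =>
      cases i using Fin.cases with
      | zero => simpa using hle j
      | succ i => simpa using hf (Fin.succ_le_succ_iff.1 hij)

theorem single_mul_mem_supported {R M : Type*} [Semiring R] [Mul M] {s : Set M} {m : M}
    (hm : ∀ m', m * m' ∈ s) (r : R) (a : MonoidAlgebra R M) :
    MonoidAlgebra.single m r * a ∈ MonoidAlgebra.supported R R s := by
  classical
  intro w hw
  obtain ⟨m', -, rfl⟩ := mem_image.1 (MonoidAlgebra.support_coeff_single_mul_subset a r m hw)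
  exact hm m'

namespace H

/-- The weakly decreasing tuples `N ≥ m₁ ≥ ⋯ ≥ mₙ ≥ 1`, over which truncated non-strict multiple
zeta values are summed. -/
def antitoneTuples (n N : ℕ) : Finset (Fin n → ℕ) :=
  {m ∈ Fintype.piFinset fun _ => Icc 1 N | Antitone m}

theorem mem_antitoneTuples {n N : ℕ} {m : Fin n → ℕ} :
    m ∈ antitoneTuples n N ↔ (∀ i, m i ∈ Icc 1 N) ∧ Antitone m := by
  rw [antitoneTuples, mem_filter, Fintype.mem_piFinset]

theorem finCons_mem_antitoneTuples {n N a : ℕ} {m : Fin n → ℕ} :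
    (Fin.cons a m : Fin (n + 1) → ℕ) ∈ antitoneTuples (n + 1) N ↔
      a ∈ Icc 1 N ∧ m ∈ antitoneTuples n a := by
  simp only [mem_antitoneTuples, Fin.forall_fin_succ, Fin.cons_zero, Fin.cons_succ,
    antitone_finCons_iff, mem_Icc]
  grind

theorem sum_antitoneTuples_succ {M : Type*} [AddCommMonoid M] (n N : ℕ)
    (g : (Fin (n + 1) → ℕ) → M) :
    ∑ m ∈ antitoneTuples (n + 1) N, g m =
      ∑ a ∈ Icc 1 N, ∑ m ∈ antitoneTuples n a, g (Fin.cons a m) := by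
  rw [sum_sigma']
  refine sum_bij' (fun m _ => ⟨m 0, Fin.tail m⟩) (fun p _ => Fin.cons p.1 p.2) ?_ ?_ ?_ ?_ ?_
  · intro m hm
    rwa [mem_sigma, ← finCons_mem_antitoneTuples, Fin.cons_self_tail]
  · exact fun p hp => finCons_mem_antitoneTuples.2 (mem_sigma.1 hp)
  · exact fun m _ => Fin.cons_self_tail m
  · exact fun p _ => by simp
  · exact fun m _ => by rw [Fin.cons_self_tail]

/-- The truncation of `ζ̄(k₁,…,kₙ)` to summation variables at most `N`. -/
noncomputable def nmzetaTrunc (ks : List ℕ) (N : ℕ) : ℝ :=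
  ∑ m ∈ antitoneTuples ks.length N, ∏ i, ((m i : ℝ) ^ ks.get i)⁻¹

theorem nmzetaTrunc_nil (N : ℕ) : nmzetaTrunc [] N = 1 := by
  simp [nmzetaTrunc, antitoneTuples, Subsingleton.antitone]

theorem nmzetaTrunc_cons (k : ℕ) (ks : List ℕ) (N : ℕ) :
    nmzetaTrunc (k :: ks) N = ∑ m ∈ Icc 1 N, ((m : ℝ) ^ k)⁻¹ * nmzetaTrunc ks m := by
  simp only [nmzetaTrunc, List.length_cons, sum_antitoneTuples_succ, Fin.prod_univ_succ, mul_sum]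
  rfl

theorem nmzetaTrunc_cons_mul_cons (k l : ℕ) (ks ls : List ℕ) (N : ℕ) :
    nmzetaTrunc (k :: ks) N * nmzetaTrunc (l :: ls) N =
      ∑ m ∈ Icc 1 N, ((m : ℝ) ^ k)⁻¹ * (nmzetaTrunc ks m * nmzetaTrunc (l :: ls) m) +
      ∑ m ∈ Icc 1 N, ((m : ℝ) ^ l)⁻¹ * (nmzetaTrunc (k :: ks) m * nmzetaTrunc ls m) -
      ∑ m ∈ Icc 1 N, ((m : ℝ) ^ (k + l))⁻¹ * (nmzetaTrunc ks m * nmzetaTrunc ls m) := by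
  rw [nmzetaTrunc_cons k, nmzetaTrunc_cons l, sum_Icc_mul_sum_Icc]
  simp only [← nmzetaTrunc_cons, pow_add, mul_inv]
  congr 1
  · exact congrArg₂ _ (sum_congr rfl fun m _ => by ring) (sum_congr rfl fun m _ => by ring)
  · exact sum_congr rfl fun m _ => by ring

/-- Admissible indices `(k₁,…,kₙ)`: all entries are positive and `k₁ ≥ 2`, which makes the series
`ζ̄(k₁,…,kₙ)` converge. The empty index is admissible. -/
def IsAdmissible (ks : List ℕ) : Prop := (∀ k ∈ ks, 0 < k) ∧ ∀ k ∈ ks.head?, 2 ≤ k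

-- As `k 0 ≥ 2`, there is a spare factor `m 0`; it dominates `∏ i, m i ^ (1 / (n + 1))`.
theorem prod_rpow_le_prod_pow {n : ℕ} {m k : Fin (n + 1) → ℕ} (hm₀ : ∀ i, 0 < m i)
    (hm : Antitone m) (hk : ∀ i, 0 < k i) (hk₀ : 2 ≤ k 0) :
    ∏ i, (m i : ℝ) ^ (1 + 1 / (n + 1) : ℝ) ≤ ∏ i, (m i : ℝ) ^ k i := by
  have one_le (i : Fin (n + 1)) : (1 : ℝ) ≤ m i := by exact_mod_cast hm₀ i
  have spread : ∏ i, (m i : ℝ) ^ (1 / (n + 1) : ℝ) ≤ m 0 :=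
    calc ∏ i, (m i : ℝ) ^ (1 / (n + 1) : ℝ)
        ≤ ∏ _i : Fin (n + 1), (m 0 : ℝ) ^ (1 / (n + 1) : ℝ) := by
          gcongr with i
          exact hm (Fin.zero_le i)
      _ = m 0 := by
          rw [prod_const, card_univ, Fintype.card_fin, one_div, ← Nat.cast_succ]
          exact Real.rpow_inv_natCast_pow (Nat.cast_nonneg _) n.succ_ne_zero
  calc ∏ i, (m i : ℝ) ^ (1 + 1 / (n + 1) : ℝ)
      = (∏ i, (m i : ℝ)) * ∏ i, (m i : ℝ) ^ (1 / (n + 1) : ℝ) := by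
        rw [← prod_mul_distrib]
        refine prod_congr rfl fun i _ => ?_
        rw [Real.rpow_add (by exact_mod_cast hm₀ i), Real.rpow_one]
    _ ≤ (∏ i, (m i : ℝ)) * m 0 := by gcongr
    _ = (m 0 : ℝ) ^ 2 * ∏ i : Fin n, (m i.succ : ℝ) := by rw [Fin.prod_univ_succ]; ring
    _ ≤ (m 0 : ℝ) ^ k 0 * ∏ i : Fin n, (m i.succ : ℝ) ^ k i.succ := by
        gcongr with i
        · exact one_le 0
        · exact le_self_pow₀ (one_le _) (hk _).ne'
    _ = ∏ i, (m i : ℝ) ^ k i := (Fin.prod_univ_succ fun i => (m i : ℝ) ^ k i).symm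

theorem summable_prod_inv_pow {n : ℕ} {k : Fin (n + 1) → ℕ} (hk : ∀ i, 0 < k i) (hk₀ : 2 ≤ k 0) :
    Summable fun m : {m : Fin (n + 1) → ℕ // (∀ i, 0 < m i) ∧ Antitone m} =>
      ∏ i, ((m.1 i : ℝ) ^ k i)⁻¹ := by
  have one_lt : (1 : ℝ) < 1 + 1 / (n + 1) := lt_add_of_pos_right _ (by positivity)
  have dominating : Summable fun m : Fin (n + 1) → ℕ =>
      ∏ i, ((m i : ℝ) ^ (1 + 1 / (n + 1) : ℝ))⁻¹ :=
    summable_prod_apply (f := fun _ (x : ℕ) => ((x : ℝ) ^ (1 + 1 / (n + 1) : ℝ))⁻¹)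
      (fun _ _ => by positivity) fun _ => Real.summable_nat_rpow_inv.2 one_lt
  refine Summable.of_nonneg_of_le (fun m => prod_nonneg fun i _ => by positivity)
    (fun ⟨m, hm₀, hm⟩ => ?_) (dominating.comp_injective Subtype.val_injective)
  have rpow_pos (i : Fin (n + 1)) : 0 < (m i : ℝ) ^ (1 + 1 / (n + 1) : ℝ) :=
    Real.rpow_pos_of_pos (Nat.cast_pos.2 (hm₀ i)) _
  simp only [Function.comp_apply, prod_inv_distrib]
  exact inv_anti₀ (prod_pos fun i _ => rpow_pos i) (prod_rpow_le_prod_pow hm₀ hm hk hk₀)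

theorem IsAdmissible.summable {ks : List ℕ} (hks : IsAdmissible ks) :
    Summable fun m : {m : Fin ks.length → ℕ // (∀ i, 0 < m i) ∧ Antitone m} =>
      ∏ i, ((m.1 i : ℝ) ^ ks.get i)⁻¹ := by
  cases ks with
  | nil =>
    have : IsEmpty (Fin ([] : List ℕ).length) := Fin.isEmpty
    exact .of_finite
  | cons k ks =>
    exact summable_prod_inv_pow (k := (k :: ks).get) (fun i => hks.1 _ (List.get_mem (k :: ks) i))
      (hks.2 k rfl)

theorem IsAdmissible.tendsto_nmzetaTrunc {ks : List ℕ} (hks : IsAdmissible ks) :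
    Tendsto (nmzetaTrunc ks) atTop (𝓝 (nmzeta ks)) := by
  classical
  let bounded (N : ℕ) : Finset {m : Fin ks.length → ℕ // (∀ i, 0 < m i) ∧ Antitone m} :=
    (antitoneTuples ks.length N).subtype _
  have mem_bounded {N m} : m ∈ bounded N ↔ ∀ i, m.1 i ≤ N := by
    simp only [bounded, mem_subtype, mem_antitoneTuples, mem_Icc]
    exact ⟨fun h i => (h.1 i).2, fun h => ⟨fun i => ⟨m.2.1 i, h i⟩, m.2.2⟩⟩
  have bounded_tendsto : Tendsto bounded atTop atTop := by
    refine tendsto_atTop_finset_of_monotone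
      (fun M N hMN m hm => mem_bounded.2 fun i => (mem_bounded.1 hm i).trans hMN) fun m => ?_
    exact ⟨∑ i, m.1 i, mem_bounded.2 fun i => single_le_sum_of_canonicallyOrdered (mem_univ i)⟩
  refine Tendsto.congr (fun N => ?_) (hks.summable.hasSum.comp bounded_tendsto)
  exact sum_subtype_of_mem (fun m : Fin ks.length → ℕ => ∏ i, ((m i : ℝ) ^ ks.get i)⁻¹)
    fun m hm => (mem_antitoneTuples.1 hm).imp_left fun h i => (mem_Icc.1 (h i)).1

theorem toZAux_replicate_append (j n : ℕ) (r : List Letter) :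
    toZAux (List.replicate j Letter.x ++ r) n = toZAux r (n + j) := by
  induction j generalizing n with
  | zero => rfl
  | succ j ih => rw [List.replicate_succ, List.cons_append, toZAux, ih, Nat.succ_add_eq_add_succ]

theorem toZ_zW_mul {k : ℕ} (hk : 0 < k) (w : FreeMonoid Letter) :
    toZ (zW k * w) = k :: toZ w := by
  rw [toZ, zW, FreeMonoid.toList_mul, FreeMonoid.toList_ofList, List.append_assoc,
    toZAux_replicate_append, List.singleton_append, toZAux, zero_add, Nat.sub_add_cancel hk, toZ]

theorem zListW_cons (k : ℕ) (ks : List ℕ) : zListW (k :: ks) = zW k * zListW ks := by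
  rw [zListW, List.flatMap_cons, FreeMonoid.ofList_append, zW, zListW]

theorem toZ_zListW {ks : List ℕ} (hks : ∀ k ∈ ks, 0 < k) : toZ (zListW ks) = ks := by
  induction ks with
  | nil => rfl
  | cons k ks ih =>
    rw [List.forall_mem_cons] at hks
    rw [zListW_cons, toZ_zW_mul hks.1, ih hks.2]

theorem pos_of_mem_toZAux {w : List Letter} {n k : ℕ} (hk : k ∈ toZAux w n) : 0 < k := by
  induction w, n using toZAux.induct <;> grind [toZAux]

theorem pos_of_mem_toZ {w : FreeMonoid Letter} {k : ℕ} (hk : k ∈ toZ w) : 0 < k :=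
  pos_of_mem_toZAux hk

theorem isAdmissible_toZ {w : FreeMonoid Letter} (hw : ∀ k ∈ (toZ w).head?, 2 ≤ k) :
    IsAdmissible (toZ w) :=
  ⟨fun _ => pos_of_mem_toZ, hw⟩

/-- The `ℚ`-linear map `H → ℝ` with `z_{k₁}⋯z_{kₙ} ↦ nmzetaTrunc [k₁,…,kₙ] N`, the truncation
of `Z̄`. -/
noncomputable def ZbarTrunc (N : ℕ) : H →ₗ[ℚ] ℝ :=
  Finsupp.linearCombination ℚ (fun w => nmzetaTrunc (toZ w) N) ∘ₗ
    (MonoidAlgebra.coeffLinearEquiv ℚ).toLinearMap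

theorem ZbarTrunc_apply (N : ℕ) (a : H) :
    ZbarTrunc N a = a.coeff.sum fun w c => (c : ℝ) * nmzetaTrunc (toZ w) N := by
  simp only [← Rat.smul_def]
  rfl

theorem ZbarTrunc_single (N : ℕ) (w : FreeMonoid Letter) (c : ℚ) :
    ZbarTrunc N (MonoidAlgebra.single w c) = c * nmzetaTrunc (toZ w) N := by
  rw [ZbarTrunc_apply, MonoidAlgebra.coeff_single, Finsupp.sum_single_index (by simp)]

theorem ZbarTrunc_word_zListW (N : ℕ) {ks : List ℕ} (hks : ∀ k ∈ ks, 0 < k) :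
    ZbarTrunc N (word (zListW ks)) = nmzetaTrunc ks N := by
  rw [word, ZbarTrunc_single, Rat.cast_one, one_mul, toZ_zListW hks]

theorem ZbarTrunc_z_mul (N : ℕ) {k : ℕ} (hk : 0 < k) (a : H) :
    ZbarTrunc N (z k * a) = ∑ m ∈ Icc 1 N, ((m : ℝ) ^ k)⁻¹ * ZbarTrunc m a := by
  induction a using MonoidAlgebra.induction_linear with
  | zero => simp
  | add a b ha hb => simp only [mul_add, map_add, ha, hb, sum_add_distrib]
  | single w c =>
    rw [z, word, MonoidAlgebra.single_mul_single, one_mul, ZbarTrunc_single, toZ_zW_mul hk,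
      nmzetaTrunc_cons, mul_sum]
    simp only [ZbarTrunc_single, mul_left_comm]

theorem ZbarTrunc_nharmW (N : ℕ) {ks ls : List ℕ} (hks : ∀ k ∈ ks, 0 < k)
    (hls : ∀ l ∈ ls, 0 < l) :
    ZbarTrunc N (nharmW ks ls) = nmzetaTrunc ks N * nmzetaTrunc ls N := by
  induction ks, ls using nharmW.induct generalizing N with
  | case1 ls => rw [nharmW, ZbarTrunc_word_zListW N hls, nmzetaTrunc_nil, one_mul]
  | case2 k ks => rw [nharmW, ZbarTrunc_word_zListW N hks, nmzetaTrunc_nil, mul_one]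
  | case3 k ks l ls ih_left ih_right ih_both =>
    obtain ⟨hk, hks'⟩ := List.forall_mem_cons.1 hks
    obtain ⟨hl, hls'⟩ := List.forall_mem_cons.1 hls
    rw [nharmW, map_sub, map_add, ZbarTrunc_z_mul N hk, ZbarTrunc_z_mul N hl,
      ZbarTrunc_z_mul N (Nat.add_pos_left hk l), nmzetaTrunc_cons_mul_cons]
    simp only [ih_left _ hks' hls, ih_right _ hks hls', ih_both _ hks' hls']

theorem ZbarTrunc_nharm (N : ℕ) (a b : H) :
    ZbarTrunc N (nharm a b) = ZbarTrunc N a * ZbarTrunc N b := by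
  simp only [nharm, map_finsuppSum, map_smul, Rat.smul_def, Rat.cast_mul,
    ZbarTrunc_nharmW N (fun _ => pos_of_mem_toZ) fun _ => pos_of_mem_toZ]
  simp only [ZbarTrunc_apply, Finsupp.sum, sum_mul_sum, mul_mul_mul_comm]

/-- The elements of `H` supported on words with admissible `z`-decomposition. It contains `H⁰`, and
is larger only because `toZ` ignores trailing letters `x`. -/
noncomputable def admissible : Submodule ℚ H :=
  MonoidAlgebra.supported ℚ ℚ {w | IsAdmissible (toZ w)}

theorem word_mem_admissible {w : FreeMonoid Letter} (hw : IsAdmissible (toZ w)) :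
    word w ∈ admissible := by
  rw [admissible, MonoidAlgebra.supported_eq_span_single]
  exact Submodule.subset_span ⟨w, hw, rfl⟩

theorem word_zListW_mem_admissible {ks : List ℕ} (hks : IsAdmissible ks) :
    word (zListW ks) ∈ admissible :=
  word_mem_admissible (by rwa [toZ_zListW hks.1])

theorem z_mul_mem_admissible {k : ℕ} (hk : 2 ≤ k) (a : H) : z k * a ∈ admissible := by
  refine single_mul_mem_supported (fun w => isAdmissible_toZ ?_) 1 a
  rw [toZ_zW_mul (by omega)]
  simpa using hk

theorem two_le_of_mem_head?_toZAux {w : List Letter} {n k : ℕ} (hn : 0 < n)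
    (hk : k ∈ (toZAux w n).head?) : 2 ≤ k := by
  induction w, n using toZAux.induct <;> grind [toZAux]

theorem X_mul_mem_admissible (a : H) : X * a ∈ admissible :=
  single_mul_mem_supported
    (fun w => isAdmissible_toZ fun _ => two_le_of_mem_head?_toZAux (w := w.toList) one_pos) 1 a

theorem H0_le_admissible : H0 ≤ admissible := by
  refine sup_le ?_ (Submodule.span_le.2 ?_)
  · rintro _ ⟨a, rfl⟩
    simpa only [LinearMap.comp_apply, LinearMap.mulLeft_apply, LinearMap.mulRight_apply, mul_assoc]
      using X_mul_mem_admissible (a * Y)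
  · rintro _ rfl
    exact word_mem_admissible (isAdmissible_toZ (by simp [toZ, toZAux]))

theorem nharmW_mem_admissible {ks ls : List ℕ} (hks : IsAdmissible ks) (hls : IsAdmissible ls) :
    nharmW ks ls ∈ admissible := by
  match ks, ls with
  | [], ls => simpa only [nharmW] using word_zListW_mem_admissible hls
  | k :: ks, [] => simpa only [nharmW] using word_zListW_mem_admissible hks
  | k :: ks, l :: ls =>
    have hk : 2 ≤ k := hks.2 k rfl
    have hl : 2 ≤ l := hls.2 l rfl
    rw [nharmW]
    exact sub_mem (add_mem (z_mul_mem_admissible hk _) (z_mul_mem_admissible hl _))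
      (z_mul_mem_admissible (hk.trans (Nat.le_add_right k l)) _)

theorem nharm_mem_admissible {a b : H} (ha : a ∈ admissible) (hb : b ∈ admissible) :
    nharm a b ∈ admissible :=
  sum_mem fun _ hv => sum_mem fun _ hw =>
    admissible.smul_mem _ (nharmW_mem_admissible (ha hv) (hb hw))

theorem tendsto_ZbarTrunc {a : H} (ha : a ∈ admissible) :
    Tendsto (fun N => ZbarTrunc N a) atTop (𝓝 (Zbar a)) := by
  simp only [ZbarTrunc_apply, Zbar, Finsupp.sum]
  exact tendsto_finsetSum _ fun w hw =>
    (IsAdmissible.tendsto_nmzetaTrunc (ha hw)).const_mul _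

end H

/-- The n-evaluation map `Z̄` is multiplicative with respect to the
n-harmonic product: `Z̄(w₁ *̄ w₂) = Z̄(w₁) Z̄(w₂)` for `w₁, w₂ ∈ H⁰`. -/
theorem Zbar_nharm_mul :
    ∀ w1 ∈ H0, ∀ w2 ∈ H0, Zbar (nharm w1 w2) = Zbar w1 * Zbar w2 := by
  intro w1 hw1 w2 hw2
  have hw1' := H0_le_admissible hw1
  have hw2' := H0_le_admissible hw2
  refine tendsto_nhds_unique (tendsto_ZbarTrunc (nharm_mem_admissible hw1' hw2')) ?_
  simpa only [ZbarTrunc_nharm] using (tendsto_ZbarTrunc hw1').mul (tendsto_ZbarTrunc hw2')
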